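/- arXiv:1906.01434 — 2 statements merged into one kernel-verified Lean document; each statement's English description precedes it below -/
import Mathlib

section
/- Let $c, b, r, R > 0$ with $b \le c/8$, $r \le R$, and $cR < 1$. Let $t_0 = 0$ and $t_{j+1} = t_j + \tau_j$ where $\tau_j \in [r, R]$ for all $j$, let $E_0 \in \mathbb{R}$, $E_j = E_0\prod_{i=0}^{j-1}(1 - c\tau_i)$, and set $\delta := (1 - cr)^2 e^{cr/8}$. Let $C \ge 0$ and let $(W_j)_{j \ge 0}$ be a sequence of nonnegative reals satisfying $W_{j+1} \le e^{-b\tau_j} W_j + C e^{-b\tau_j} E_j^2$ for all $j \ge 0$. Then $\delta < 1$ and for every $n \ge 0$, $W_n \le \left(W_0 + \frac{C E_0^2}{1 - \delta}\right) e^{-b t_n}$. -/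
theorem aux_mono (x y : ℝ) (hx : 0 ≤ x) (hxy : x ≤ y) (hy : y < 1) :
    (1 - y) ^ 2 ≤ (1 - x) ^ 2 * Real.exp (-2 * (y - x)) := by
  have h1 : 1 - (y - x) ≤ Real.exp (-(y - x)) := by
    have := Real.add_one_le_exp (-(y - x)); linarith
  have h2 : 1 - y ≤ (1 - x) * Real.exp (-(y - x)) := by
    have := mul_le_mul_of_nonneg_left h1 (by linarith : 0 ≤ 1 - x)
    nlinarith [mul_nonneg hx (sub_nonneg.2 hxy)]
  have h3 : Real.exp (-2 * (y - x)) = Real.exp (-(y - x)) ^ 2 := by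
    rw [← Real.exp_nat_mul]; congr 1; push_cast; ring
  rw [h3, ← mul_pow]
  exact pow_le_pow_left₀ (by linarith) h2 2

/-- Discrete Gronwall-type estimate (equation (62)): the recursive Lyapunov bound
between sampling instants together with the explicit decay of the sampled energies
yields exponential decay of the Lyapunov sequence at rate `b`. -/
theorem stmt_4 (c b r R C E₀ : ℝ) (hc : 0 < c) (hb : 0 < b) (hr : 0 < r) (hR : 0 < R)
    (hbc : b ≤ c / 8) (hrR : r ≤ R) (hcR : c * R < 1) (hC : 0 ≤ C)
    (τ t : ℕ → ℝ) (hτ : ∀ j, τ j ∈ Set.Icc r R)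
    (ht0 : t 0 = 0) (ht : ∀ j, t (j + 1) = t j + τ j)
    (E : ℕ → ℝ) (hE : ∀ j, E j = E₀ * ∏ i ∈ Finset.range j, (1 - c * τ i))
    (W : ℕ → ℝ) (hW : ∀ j, 0 ≤ W j)
    (hWrec : ∀ j, W (j + 1) ≤ Real.exp (-b * τ j) * W j + C * Real.exp (-b * τ j) * (E j) ^ 2) :
    (1 - c * r) ^ 2 * Real.exp (c * r / 8) < 1 ∧
    ∀ n, W n ≤ (W 0 + C * E₀ ^ 2 / (1 - (1 - c * r) ^ 2 * Real.exp (c * r / 8))) *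
      Real.exp (-b * t n) := by
  have hcr : 0 < c * r := mul_pos hc hr
  have hcr1 : c * r < 1 := lt_of_le_of_lt (mul_le_mul_of_nonneg_left hrR hc.le) hcR
  set δ := (1 - c * r) ^ 2 * Real.exp (c * r / 8) with hδ
  have hδ0 : 0 ≤ δ := by positivity
  have hδ1 : δ < 1 := by
    have h := aux_mono 0 (c * r) le_rfl hcr.le hcr1
    calc δ ≤ (1 - 0) ^ 2 * Real.exp (-2 * (c * r - 0)) * Real.exp (c * r / 8) :=
          mul_le_mul_of_nonneg_right h (Real.exp_pos _).le
      _ = Real.exp (-2 * (c * r - 0) + c * r / 8) := by rw [Real.exp_add]; ring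
      _ < 1 := Real.exp_lt_one_iff.2 (by linarith)
  refine ⟨hδ1, ?_⟩
  have hstep : ∀ j, (1 - c * τ j) ^ 2 ≤ δ * Real.exp (-b * τ j) := by
    intro j
    obtain ⟨h1, h2⟩ := hτ j
    have hxy : c * r ≤ c * τ j := mul_le_mul_of_nonneg_left h1 hc.le
    have hy : c * τ j < 1 := lt_of_le_of_lt (mul_le_mul_of_nonneg_left h2 hc.le) hcR
    have hbτ : b * τ j ≤ c / 8 * τ j := mul_le_mul_of_nonneg_right hbc (by linarith)
    refine (aux_mono _ _ hcr.le hxy hy).trans ?_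
    rw [hδ, mul_assoc, ← Real.exp_add]
    refine mul_le_mul_of_nonneg_left (Real.exp_le_exp.2 ?_) (sq_nonneg _)
    linarith
  have hEn : ∀ n, (E n) ^ 2 ≤ E₀ ^ 2 * δ ^ n * Real.exp (-b * t n) := by
    intro n
    induction n with
    | zero => simp [hE, ht0]
    | succ n ih =>
      have h1 : E (n + 1) = E n * (1 - c * τ n) := by
        rw [hE, hE, Finset.prod_range_succ]; ring
      have h2 : Real.exp (-b * t (n + 1)) = Real.exp (-b * t n) * Real.exp (-b * τ n) := by
        rw [ht, ← Real.exp_add]; congr 1; ring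
      rw [h1, h2, mul_pow]
      calc _ ≤ (E₀ ^ 2 * δ ^ n * Real.exp (-b * t n)) * (δ * Real.exp (-b * τ n)) :=
            mul_le_mul ih (hstep n) (sq_nonneg _) (by positivity)
        _ = _ := by ring
  set A := C * E₀ ^ 2 / (1 - δ) with hA
  have hA0 : 0 ≤ A := div_nonneg (by positivity) (by linarith)
  have hAC : C * E₀ ^ 2 = A * (1 - δ) := by
    rw [hA, div_mul_cancel₀]; linarith
  have key : ∀ n, W n ≤ (W 0 + A * (1 - δ ^ n)) * Real.exp (-b * t n) := by
    intro n
    induction n with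
    | zero => simp [ht0]
    | succ n ih =>
      have h2 : Real.exp (-b * t (n + 1)) = Real.exp (-b * t n) * Real.exp (-b * τ n) := by
        rw [ht, ← Real.exp_add]; congr 1; ring
      have h3 := mul_le_mul_of_nonneg_left (hEn n) hC
      have h4 : W n + C * (E n) ^ 2 ≤ (W 0 + A * (1 - δ ^ n)) * Real.exp (-b * t n)
          + (A * (1 - δ)) * δ ^ n * Real.exp (-b * t n) := by
        rw [← hAC]; linarith
      have h5 := mul_le_mul_of_nonneg_left h4 (Real.exp_pos (-b * τ n)).le
      rw [h2]
      refine (hWrec n).trans ?_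
      refine le_trans (le_of_eq (by ring)) (h5.trans (le_of_eq ?_))
      ring
  intro n
  refine (key n).trans (mul_le_mul_of_nonneg_right ?_ (Real.exp_pos _).le)
  have := mul_nonneg hA0 (pow_nonneg hδ0 n)
  linarith
end

section
/- Let $c, r, R > 0$ with $r \le R$ and $cR < 1$. Let $0 = t_0 < t_1 < \cdots$ with $t_j \to \infty$ and $\tau_j := t_{j+1} - t_j \in [r, R]$ for all $j$. Let $E_0 \in \mathbb{R}$ and let $E : [0,\infty) \to \mathbb{R}$ satisfy $E(t) = (1 - c(t - t_j))\,E_0\prod_{i=0}^{j-1}(1 - c\tau_i)$ for all $t \in [t_j, t_{j+1})$ and all $j \ge 0$. Then for all $t \ge 0$, $|E(t)| \le \frac{|E_0|}{1 - cr}\,\exp\!\left(\frac{\ln(1 - cr)}{R}\, t\right)$; in particular $E(t) \to 0$ exponentially as $t \to \infty$. -/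
open Filter Set

/-- Exponential decay of the internal energy in continuous time under ZOH
sampled-data control: `|E(t)| ≤ |E₀|/(1 - cr) · exp( (ln(1 - cr)/R) t )`. -/
theorem stmt_12 (c r R E₀ : ℝ) (hc : 0 < c) (hr : 0 < r) (hR : 0 < R)
    (hrR : r ≤ R) (hcR : c * R < 1)
    (t : ℕ → ℝ) (ht0 : t 0 = 0) (htmono : StrictMono t)
    (htinf : Tendsto t atTop atTop)
    (hτ : ∀ j, t (j + 1) - t j ∈ Icc r R)
    (E : ℝ → ℝ)
    (hE : ∀ j, ∀ x ∈ Ico (t j) (t (j + 1)),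
      E x = (1 - c * (x - t j)) *
        (E₀ * ∏ i ∈ Finset.range j, (1 - c * (t (i + 1) - t i)))) :
    (∀ x : ℝ, 0 ≤ x →
      |E x| ≤ |E₀| / (1 - c * r) * Real.exp (Real.log (1 - c * r) / R * x)) ∧
    Tendsto E atTop (nhds 0) := by
  have hcr : c * r ≤ c * R := mul_le_mul_of_nonneg_left hrR hc.le
  have hcr0 : 0 < c * r := mul_pos hc hr
  have hq0 : 0 < 1 - c * r := by linarith
  have hq1 : 1 - c * r < 1 := by linarith
  have hlog : Real.log (1 - c * r) < 0 := Real.log_neg hq0 hq1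
  have hup : ∀ j : ℕ, t j ≤ j * R := by
    intro j
    induction j with
    | zero => simp [ht0]
    | succ k ih =>
      have := (hτ k).2
      push_cast
      linarith
  have hfac : ∀ i, 0 ≤ 1 - c * (t (i + 1) - t i) ∧
      1 - c * (t (i + 1) - t i) ≤ 1 - c * r := by
    intro i
    have h1 := mul_le_mul_of_nonneg_left (hτ i).1 hc.le
    have h2 := mul_le_mul_of_nonneg_left (hτ i).2 hc.le
    constructor <;> linarith
  have hprod : ∀ j : ℕ, |∏ i ∈ Finset.range j, (1 - c * (t (i + 1) - t i))|
      ≤ (1 - c * r) ^ j := by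
    intro j
    rw [abs_of_nonneg (Finset.prod_nonneg fun i _ => (hfac i).1)]
    calc _ ≤ ∏ i ∈ Finset.range j, (1 - c * r) :=
          Finset.prod_le_prod (fun i _ => (hfac i).1) (fun i _ => (hfac i).2)
      _ = _ := by simp
  have hmain : ∀ x : ℝ, 0 ≤ x →
      |E x| ≤ |E₀| / (1 - c * r) * Real.exp (Real.log (1 - c * r) / R * x) := by
    intro x hx
    have hex : ∃ n, x < t n := (htinf.eventually_gt_atTop x).exists
    classical
    obtain ⟨j, hj1, hj2⟩ : ∃ j, t j ≤ x ∧ x < t (j + 1) := by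
      have hs := Nat.find_spec hex
      have hm := fun m => Nat.find_min hex (m := m)
      rcases hn : Nat.find hex with _ | k
      · rw [hn, ht0] at hs
        linarith
      · rw [hn] at hs
        exact ⟨k, not_lt.1 (hm k (by omega)), hs⟩
    rw [hE j x ⟨hj1, hj2⟩, abs_mul, abs_mul]
    have h1 : |1 - c * (x - t j)| ≤ 1 := by
      have h2 := (hτ j).2
      have h3 : 0 ≤ c * (x - t j) := mul_nonneg hc.le (by linarith)
      have h4 : c * (x - t j) ≤ c * R :=
        mul_le_mul_of_nonneg_left (by linarith) hc.le
      rw [abs_le]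
      constructor <;> linarith
    have hxR : x / R ≤ (j : ℝ) + 1 := by
      rw [div_le_iff₀ hR]
      have := hup (j + 1)
      push_cast at this
      linarith
    have hexp : (1 - c * r) ^ (j + 1) ≤ Real.exp (Real.log (1 - c * r) / R * x) := by
      rw [← Real.exp_log (pow_pos hq0 (j + 1)), Real.log_pow, Real.exp_le_exp]
      have h5 := mul_le_mul_of_nonpos_left hxR hlog.le
      have h6 : Real.log (1 - c * r) / R * x = Real.log (1 - c * r) * (x / R) := by ring
      rw [h6]
      push_cast
      linarith
    calc _ ≤ 1 * (|E₀| * (1 - c * r) ^ j) := by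
          gcongr
          exact hprod j
      _ = |E₀| / (1 - c * r) * (1 - c * r) ^ (j + 1) := by
          field_simp
          rw [pow_succ]
          ac_rfl
      _ ≤ _ := by gcongr
  refine ⟨hmain, ?_⟩
  have hlim : Tendsto (fun x : ℝ => |E₀| / (1 - c * r) *
      Real.exp (Real.log (1 - c * r) / R * x)) atTop (nhds 0) := by
    have h := (Real.tendsto_exp_atBot.comp
      (tendsto_id.const_mul_atTop_of_neg (div_neg_of_neg_of_pos hlog hR))).const_mul
        (|E₀| / (1 - c * r))
    simpa using h
  refine squeeze_zero_norm' ?_ hlim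
  filter_upwards [eventually_ge_atTop (0 : ℝ)] with x hx
  exact hmain x hx
end
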